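/- Let r ≥ 2 and let k_i, k_i' ≥ 0 for 2 ≤ i ≤ r − 1 and j_1 ≥ 1 odd, with j_i := k_i + k_i' for 2 ≤ i ≤ r − 1 and j_{r−1} ≥ 1. Let n = 2^{r−1} j_{r−1} + ⋯ + 4 j_2 + 2 j_1 + 1, and let B ∈ GL(n, ℤ) be the block-diagonal matrix B = diag(C_{r−1}, …, C_{r−1} (k_{r−1} copies), J_{r−1}, …, J_{r−1} (k_{r−1}' copies), …, C_2, …, C_2 (k_2 copies), J_2, …, J_2 (k_2' copies), J_1, …, J_1 (j_1 copies), 1). Let Γ be the subgroup of the group of affine bijections of ℝ^n generated by γ : x ↦ Bx + (1/2^r) e_n together with all translations by vectors in ℤ^n. Then the group of all group homomorphisms Γ → ℤ/2ℤ is isomorphic to (ℤ/2ℤ)^{j_{r−1} + ⋯ + j_2 + j_1 + 1}; in particular it has exactly 2^{j_{r−1} + ⋯ + j_1 + 1} elements. -/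

import Mathlib

open Matrix

/-- `Cmat r` is the `2^r × 2^r` companion matrix of `X^(2^r) + 1`. -/
def Cmat (r : ℕ) : Matrix (Fin (2 ^ r)) (Fin (2 ^ r)) ℤ :=
  Matrix.of fun i j =>
    if (i : ℕ) = (j : ℕ) + 1 then 1
    else if (i : ℕ) = 0 ∧ (j : ℕ) = 2 ^ r - 1 then -1
    else 0

/-- The matrices `J_r`, defined recursively: `J_0 = (−1)` and
`J_{r+1} = [[0, J_r], [I, 0]]` as a `2^(r+1) × 2^(r+1)` block matrix. -/
def Jmat : (r : ℕ) → Matrix (Fin (2 ^ r)) (Fin (2 ^ r)) ℤ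
  | 0 => Matrix.of fun _ _ => -1
  | (r + 1) =>
      Matrix.reindex
        ((finSumFinEquiv (m := 2 ^ r) (n := 2 ^ r)).trans
          (finCongr (show 2 ^ r + 2 ^ r = 2 ^ (r + 1) by rw [pow_succ]; omega)))
        ((finSumFinEquiv (m := 2 ^ r) (n := 2 ^ r)).trans
          (finCongr (show 2 ^ r + 2 ^ r = 2 ^ (r + 1) by rw [pow_succ]; omega)))
        (Matrix.fromBlocks 0 (Jmat r) 1 0)

/-- Index type for the diagonal blocks of the matrix
`B = diag(C_{r−1} (k_{r−1} copies), J_{r−1} (k'_{r−1} copies), …,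
C_2 (k_2 copies), J_2 (k'_2 copies), J_1 (j₁ copies), 1)`:
for each `i` with `2 ≤ i ≤ r − 1` (encoded as `i₀ + 2` with `i₀ : Fin (r − 2)`) there are
`k i` blocks `C_i` and `k' i` blocks `J_i`; then `j₁` blocks `J_1`; then one `1 × 1` block. -/
abbrev BlockIx (r : ℕ) (k k' : ℕ → ℕ) (j₁ : ℕ) : Type :=
  (Σ i : Fin (r - 2), (Fin (k (i.val + 2)) ⊕ Fin (k' (i.val + 2)))) ⊕ (Fin j₁ ⊕ Unit)

/-- The size of each diagonal block. -/
def blockSize (r : ℕ) (k k' : ℕ → ℕ) (j₁ : ℕ) : BlockIx r k k' j₁ → ℕ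
  | Sum.inl ⟨i, _⟩ => 2 ^ (i.val + 2)
  | Sum.inr (Sum.inl _) => 2 ^ 1
  | Sum.inr (Sum.inr _) => 2 ^ 0

/-- The diagonal blocks themselves. -/
def blockMat (r : ℕ) (k k' : ℕ → ℕ) (j₁ : ℕ) :
    (x : BlockIx r k k' j₁) →
      Matrix (Fin (blockSize r k k' j₁ x)) (Fin (blockSize r k k' j₁ x)) ℤ
  | Sum.inl ⟨i, Sum.inl _⟩ => Cmat (i.val + 2)
  | Sum.inl ⟨i, Sum.inr _⟩ => Jmat (i.val + 2)
  | Sum.inr (Sum.inl _) => Jmat 1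
  | Sum.inr (Sum.inr _) => 1

/-- scaled lattice embedding -/
noncomputable def scaledEmb {n : ℕ} (r : ℕ) (l : Fin n) (N : Fin n → ℤ) : Fin n → ℝ :=
  (fun i => (N i : ℝ)) + Pi.single l ((N l : ℝ) * ((2 : ℝ) ^ r)⁻¹ - N l)

theorem scaledEmb_apply_last {n : ℕ} (r : ℕ) (l : Fin n) (N : Fin n → ℤ) :
    scaledEmb r l N l = (N l : ℝ) * ((2 : ℝ) ^ r)⁻¹ := by
  simp [scaledEmb]

theorem scaledEmb_apply_ne {n : ℕ} (r : ℕ) (l : Fin n) (N : Fin n → ℤ) (i : Fin n) (h : i ≠ l) :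
    scaledEmb r l N i = (N i : ℝ) := by
  simp [scaledEmb, h]

theorem scaledEmb_inj {n : ℕ} (r : ℕ) (l : Fin n) : Function.Injective (scaledEmb r l) := by
  intro N N' h
  funext i
  have hi := congrFun h i
  by_cases hil : i = l
  · subst hil
    rw [scaledEmb_apply_last, scaledEmb_apply_last] at hi
    have : ((2 : ℝ) ^ r)⁻¹ ≠ 0 := by positivity
    exact_mod_cast mul_right_cancel₀ this hi
  · rw [scaledEmb_apply_ne _ _ _ _ hil, scaledEmb_apply_ne _ _ _ _ hil] at hi
    exact_mod_cast hi

/-- mod 2 functional -/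
def modFun {n : ℕ} (a : Fin n → ZMod 2) (N : Fin n → ℤ) : ZMod 2 :=
  a ⬝ᵥ (fun i => (N i : ZMod 2))

theorem modFun_add {n : ℕ} (a : Fin n → ZMod 2) (N N' : Fin n → ℤ) :
    modFun a (N + N') = modFun a N + modFun a N' := by
  simp only [modFun, ← dotProduct_add]
  congr 1
  funext i
  simp

theorem modFun_single {n : ℕ} (a : Fin n → ZMod 2) (i : Fin n) :
    modFun a (Pi.single i 1) = a i := by
  have : (fun j => ((Pi.single i (1:ℤ) : Fin n → ℤ) j : ZMod 2)) = Pi.single i 1 := by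
    funext j
    by_cases h : j = i
    · subst h; simp
    · simp [h]
  rw [modFun, this]; simp

theorem modFun_mulVec {n : ℕ} (a : Fin n → ZMod 2) (B : Matrix (Fin n) (Fin n) ℤ)
    (hB : a ᵥ* (B.map (Int.cast : ℤ → ZMod 2)) = a) (N : Fin n → ℤ) :
    modFun a (B *ᵥ N) = modFun a N := by
  have : (fun j => ((B *ᵥ N) j : ZMod 2)) =
      (B.map (Int.cast : ℤ → ZMod 2)) *ᵥ (fun i => (N i : ZMod 2)) := by
    funext j
    simp [mulVec, dotProduct]
  rw [modFun, this, dotProduct_mulVec, hB, modFun]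

/-- relation -/
def AffRel {n : ℕ} (r : ℕ) (l : Fin n) (a : Fin n → ZMod 2)
    (g : (Fin n → ℝ) ≃ᵃ[ℝ] (Fin n → ℝ)) (c : ZMod 2) : Prop :=
  ∃ σ : (Fin n → ℤ) ≃ (Fin n → ℤ), (∀ N, g (scaledEmb r l N) = scaledEmb r l (σ N)) ∧
    ∀ N, modFun a (σ N) = modFun a N + c

theorem AffRel.uniq {n : ℕ} {r : ℕ} {l : Fin n} {a : Fin n → ZMod 2}
    {g : (Fin n → ℝ) ≃ᵃ[ℝ] (Fin n → ℝ)} {c d : ZMod 2}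
    (h : AffRel r l a g c) (h' : AffRel r l a g d) : c = d := by
  obtain ⟨σ, h1, h2⟩ := h
  obtain ⟨σ', h1', h2'⟩ := h'
  have : σ 0 = σ' 0 := scaledEmb_inj r l ((h1 0).symm.trans (h1' 0))
  have e1 := h2 0
  rw [this, h2' 0] at e1
  exact (add_left_cancel e1).symm

theorem AffRel.one {n : ℕ} {r : ℕ} {l : Fin n} {a : Fin n → ZMod 2} : AffRel r l a 1 0 :=
  ⟨Equiv.refl _, fun N => rfl, fun N => by simp⟩

theorem AffRel.mul {n : ℕ} {r : ℕ} {l : Fin n} {a : Fin n → ZMod 2}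
    {g h : (Fin n → ℝ) ≃ᵃ[ℝ] (Fin n → ℝ)} {c d : ZMod 2}
    (hg : AffRel r l a g c) (hh : AffRel r l a h d) : AffRel r l a (g * h) (c + d) := by
  obtain ⟨σ, h1, h2⟩ := hg
  obtain ⟨σ', h1', h2'⟩ := hh
  refine ⟨σ'.trans σ, fun N => ?_, fun N => ?_⟩
  · show g (h _) = _
    rw [h1', h1]; rfl
  · simp only [Equiv.trans_apply, h2, h2']; ring

theorem AffRel.inv {n : ℕ} {r : ℕ} {l : Fin n} {a : Fin n → ZMod 2}
    {g : (Fin n → ℝ) ≃ᵃ[ℝ] (Fin n → ℝ)} {c : ZMod 2}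
    (hg : AffRel r l a g c) : AffRel r l a g⁻¹ (-c) := by
  obtain ⟨σ, h1, h2⟩ := hg
  refine ⟨σ.symm, fun N => ?_, fun N => ?_⟩
  · show g.symm _ = _
    apply g.injective
    rw [AffineEquiv.apply_symm_apply, h1, Equiv.apply_symm_apply]
  · have := h2 (σ.symm N)
    rw [Equiv.apply_symm_apply] at this
    rw [this]; ring

theorem cast_mulVec {n : ℕ} (B : Matrix (Fin n) (Fin n) ℤ) (N : Fin n → ℤ) :
    (B.map (Int.cast : ℤ → ℝ)) *ᵥ (fun i => (N i : ℝ)) = fun i => ((B *ᵥ N) i : ℝ) := by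
  funext j
  simp [mulVec, dotProduct]

/-- translations -/
noncomputable def zTrans {n : ℕ} (v : Fin n → ℤ) : (Fin n → ℝ) ≃ᵃ[ℝ] (Fin n → ℝ) :=
  AffineEquiv.constVAdd ℝ (Fin n → ℝ) (fun i => (v i : ℝ))

theorem zTrans_apply {n : ℕ} (v : Fin n → ℤ) (x : Fin n → ℝ) :
    zTrans v x = (fun i => (v i : ℝ)) + x := rfl

theorem zTrans_add {n : ℕ} (v w : Fin n → ℤ) : zTrans (v + w) = zTrans v * zTrans w := by
  ext x i
  show (zTrans (v + w) x) i = (zTrans v (zTrans w x)) i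
  simp [zTrans_apply, add_assoc]

theorem AffRel.ofTrans {n : ℕ} (r : ℕ) (l : Fin n) (a : Fin n → ZMod 2) (v : Fin n → ℤ) :
    AffRel r l a (zTrans v) (modFun a (Function.update v l (2 ^ r * v l))) := by
  refine ⟨Equiv.addRight (Function.update v l (2 ^ r * v l)), fun N => ?_, fun N => ?_⟩
  · funext i
    rw [zTrans_apply]
    by_cases hil : i = l
    · subst hil
      simp only [Pi.add_apply, scaledEmb_apply_last, Equiv.coe_addRight, Function.update_self]
      push_cast
      field_simp
      ring
    · simp [scaledEmb_apply_ne _ _ _ _ hil, hil, add_comm]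
  · simp [modFun_add]

theorem AffRel.gamma {n : ℕ} (r : ℕ) (l : Fin n) (a : Fin n → ZMod 2) (B : GL (Fin n) ℤ)
    (hcol : B.1 *ᵥ Pi.single l 1 = Pi.single l 1)
    (hrow : Pi.single l 1 ᵥ* B.1 = Pi.single l 1)
    (ha : a ᵥ* (B.1.map (Int.cast : ℤ → ZMod 2)) = a)
    (γ : (Fin n → ℝ) ≃ᵃ[ℝ] (Fin n → ℝ))
    (hγ : ∀ x, γ x = (B.1.map (Int.cast : ℤ → ℝ)) *ᵥ x + Pi.single l (((2 : ℝ) ^ r)⁻¹)) :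
    AffRel r l a γ (a l) := by
  have hl : ∀ N : Fin n → ℤ, (B.1 *ᵥ N) l = N l := by
    intro N
    have : Pi.single l 1 ⬝ᵥ (B.1 *ᵥ N) = Pi.single l 1 ⬝ᵥ N := by
      rw [dotProduct_mulVec, hrow]
    simpa using this
  have hc : ∀ c : ℝ, (B.1.map (Int.cast : ℤ → ℝ)) *ᵥ Pi.single l c = Pi.single l c := by
    intro c
    funext i
    have h1 := congrFun hcol i
    simp only [mulVec_single_one, col_apply] at h1
    simp only [mulVec_single, Pi.smul_apply, col_apply, map_apply, h1]
    by_cases h : i = l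
    · subst h; simp
    · simp [h]
  refine ⟨(Equiv.mk (fun N => B.1 *ᵥ N) (fun N => B⁻¹.1 *ᵥ N) (fun N => ?_) (fun N => ?_)).trans
    (Equiv.addRight (Pi.single l 1)), fun N => ?_, fun N => ?_⟩
  · simp [mulVec_mulVec]
  · simp [mulVec_mulVec]
  · rw [hγ, scaledEmb, mulVec_add, hc, cast_mulVec]
    funext i
    by_cases hil : i = l
    · subst hil
      simp [scaledEmb_apply_last, hl]
      ring
    · simp [scaledEmb_apply_ne _ _ _ _ hil, hil]
  · simp [modFun_add, modFun_mulVec a _ ha, modFun_single]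

theorem gamma_pow {n : ℕ} (r : ℕ) (l : Fin n) (B : GL (Fin n) ℤ)
    (hcol : B.1 *ᵥ Pi.single l 1 = Pi.single l 1)
    (γ : (Fin n → ℝ) ≃ᵃ[ℝ] (Fin n → ℝ))
    (hγ : ∀ x, γ x = (B.1.map (Int.cast : ℤ → ℝ)) *ᵥ x + Pi.single l (((2 : ℝ) ^ r)⁻¹))
    (hB : B.1 ^ (2 ^ r) = 1) : γ ^ (2 ^ r) = zTrans (Pi.single l 1) := by
  have hc : ∀ c : ℝ, (B.1.map (Int.cast : ℤ → ℝ)) *ᵥ Pi.single l c = Pi.single l c := by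
    intro c
    funext i
    have h1 := congrFun hcol i
    simp only [mulVec_single_one, col_apply] at h1
    simp only [mulVec_single, Pi.smul_apply, col_apply, map_apply, h1]
    by_cases h : i = l
    · subst h; simp
    · simp [h]
  have key : ∀ m : ℕ, ∀ x, (γ ^ m) x =
      ((B.1 ^ m).map (Int.cast : ℤ → ℝ)) *ᵥ x + Pi.single l ((m : ℝ) * ((2 : ℝ) ^ r)⁻¹) := by
    intro m
    induction m with
    | zero => intro x; simp
    | succ m ih =>
      intro x
      rw [pow_succ']
      show γ ((γ ^ m) x) = _
      rw [ih, hγ, mulVec_add, hc, mulVec_mulVec, add_assoc, ← Pi.single_add, pow_succ']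
      congr 2
      · ext i j; simp [Matrix.mul_apply]
      · push_cast; ring
  ext x i
  rw [key, hB, zTrans_apply]
  have : (fun i => ((Pi.single l (1:ℤ) : Fin n → ℤ) i : ℝ)) = Pi.single l 1 := by
    funext j
    by_cases h : j = l
    · subst h; simp
    · simp [h]
  rw [this]
  simp [add_comm]

theorem hom_equiv {n : ℕ} (r : ℕ) (l : Fin n) (B : GL (Fin n) ℤ)
    (hcol : B.1 *ᵥ Pi.single l 1 = Pi.single l 1)
    (hrow : Pi.single l 1 ᵥ* B.1 = Pi.single l 1)
    (hB : B.1 ^ (2 ^ r) = 1)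
    {β : Type} (b : Fin n → β) (sec : β → Fin n) (hs : ∀ t, b (sec t) = t)
    (hl : sec (b l) = l)
    (ha : ∀ a : Fin n → ZMod 2, a ᵥ* (B.1.map (Int.cast : ℤ → ZMod 2)) = a ↔
      ∀ i, a i = a (sec (b i)))
    (γ : (Fin n → ℝ) ≃ᵃ[ℝ] (Fin n → ℝ))
    (hγ : ∀ x, γ x = (B.1.map (Int.cast : ℤ → ℝ)) *ᵥ x + Pi.single l (((2 : ℝ) ^ r)⁻¹))
    (Γ : Subgroup ((Fin n → ℝ) ≃ᵃ[ℝ] (Fin n → ℝ)))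
    (hΓ : Γ = Subgroup.closure ({γ} ∪ Set.range (fun v : Fin n → ℤ => zTrans v))) :
    Nonempty ((↥Γ →* Multiplicative (ZMod 2)) ≃* Multiplicative (β → ZMod 2)) := by
  classical
  have hγm : γ ∈ Γ := by rw [hΓ]; exact Subgroup.subset_closure (Or.inl rfl)
  have hτm : ∀ v, zTrans v ∈ Γ := by
    intro v; rw [hΓ]; exact Subgroup.subset_closure (Or.inr ⟨v, rfl⟩)
  let gen : β → Γ := fun t =>
    if sec t = l then ⟨γ, hγm⟩ else ⟨zTrans (Pi.single (sec t) 1), hτm _⟩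
  let F : (↥Γ →* Multiplicative (ZMod 2)) →* Multiplicative (β → ZMod 2) :=
    { toFun := fun φ => Multiplicative.ofAdd (fun t => (φ (gen t)).toAdd)
      map_one' := rfl
      map_mul' := fun φ ψ => rfl }
  refine ⟨MulEquiv.ofBijective F ⟨?_, ?_⟩⟩
  · rw [injective_iff_map_eq_one]
    intro φ hφ
    have hgen : ∀ t, φ (gen t) = 1 := fun t => congrFun hφ t
    have h1 : φ ⟨γ, hγm⟩ = 1 := by
      have := hgen (b l)
      simpa only [gen, hl, if_true] using this
    -- the restriction to translations
    let ψ : (Fin n → ℤ) →+ ZMod 2 :=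
      { toFun := fun v => (φ ⟨zTrans v, hτm v⟩).toAdd
        map_zero' := by
          have : (⟨zTrans 0, hτm 0⟩ : Γ) = 1 := by
            apply Subtype.ext
            ext x i
            simp [zTrans_apply]
          simp [this]
        map_add' := fun v w => by
          have : (⟨zTrans (v + w), hτm _⟩ : Γ) = ⟨zTrans v, hτm v⟩ * ⟨zTrans w, hτm w⟩ :=
            Subtype.ext (zTrans_add v w)
          rw [this, map_mul]; rfl }
    have hψB : ∀ v, ψ (B.1 *ᵥ v) = ψ v := by
      intro v
      have : (⟨zTrans (B.1 *ᵥ v), hτm _⟩ : Γ) * ⟨γ, hγm⟩ = ⟨γ, hγm⟩ * ⟨zTrans v, hτm v⟩ := by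
        apply Subtype.ext
        apply AffineEquiv.ext
        intro x
        show zTrans (B.1 *ᵥ v) (γ x) = γ (zTrans v x)
        rw [hγ, hγ, zTrans_apply, zTrans_apply, mulVec_add, cast_mulVec, add_assoc]
      have h2 := congrArg φ this
      rw [map_mul, map_mul, h1, mul_one, one_mul] at h2
      exact congrArg Multiplicative.toAdd h2
    have hψl : ψ (Pi.single l 1) = 0 := by
      have : (⟨zTrans (Pi.single l 1), hτm _⟩ : Γ) = ⟨γ, hγm⟩ ^ (2 ^ r) :=
        Subtype.ext (gamma_pow r l B hcol γ hγ hB).symm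
      show (φ _).toAdd = 0
      rw [this, map_pow, h1, one_pow]; rfl
    let a : Fin n → ZMod 2 := fun i => ψ (Pi.single i 1)
    have hψa : ∀ v, ψ v = modFun a v := by
      intro v
      conv_lhs => rw [← Finset.univ_sum_single v]
      rw [map_sum, modFun, dotProduct]
      refine Finset.sum_congr rfl fun i _ => ?_
      have : (Pi.single i (v i) : Fin n → ℤ) = v i • Pi.single i 1 := by
        rw [← Pi.single_smul]; simp
      rw [this, map_zsmul, zsmul_eq_mul, mul_comm]
    have hainv : a ᵥ* (B.1.map (Int.cast : ℤ → ZMod 2)) = a := by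
      funext i
      have := hψB (Pi.single i 1)
      rw [hψa] at this
      rw [show a i = ψ (Pi.single i 1) from rfl, ← this]
      simp [modFun, vecMul]
    have hasec := (ha a).1 hainv
    have hbl : ∀ t, a (sec t) = 0 := by
      intro t
      by_cases h : sec t = l
      · rw [h]; exact hψl
      · have := hgen t
        simp only [gen, h, if_false] at this
        exact congrArg Multiplicative.toAdd this
    have ha0 : a = 0 := by
      funext i; rw [hasec, hbl]; rfl
    have hτ1 : ∀ v, φ ⟨zTrans v, hτm v⟩ = 1 := by
      intro v
      have := hψa v
      rw [ha0] at this
      simp only [modFun, zero_dotProduct] at this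
      exact this
    have hall : ∀ g (hg : g ∈ Γ), φ ⟨g, hg⟩ = 1 := by
      intro g hg
      have hg' := hg
      rw [hΓ] at hg'
      suffices ∃ hg, φ ⟨g, hg⟩ = 1 from this.2
      induction hg' using Subgroup.closure_induction with
      | mem x hx =>
        rcases hx with hx | ⟨v, rfl⟩
        · cases hx; exact ⟨hγm, h1⟩
        · exact ⟨hτm v, hτ1 v⟩
      | one => exact ⟨Γ.one_mem, map_one φ⟩
      | mul x y _ _ hx hy =>
        obtain ⟨mx, hx⟩ := hx (by rw [hΓ]; assumption)
        obtain ⟨my, hy⟩ := hy (by rw [hΓ]; assumption)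
        refine ⟨Γ.mul_mem mx my, ?_⟩
        have := map_mul φ ⟨x, mx⟩ ⟨y, my⟩
        rw [hx, hy, one_mul] at this
        exact this
      | inv x _ hx =>
        obtain ⟨mx, hx⟩ := hx (by rw [hΓ]; assumption)
        refine ⟨Γ.inv_mem mx, ?_⟩
        have := map_inv φ ⟨x, mx⟩
        rw [hx, inv_one] at this
        exact this
    ext g
    rw [hall g.1 g.2]; rfl
  · intro t'
    let t : β → ZMod 2 := t'.toAdd
    let a : Fin n → ZMod 2 := fun i => t (b i)
    have hainv : a ᵥ* (B.1.map (Int.cast : ℤ → ZMod 2)) = a :=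
      (ha a).2 fun i => by simp only [a, hs]
    have hex : ∀ g : Γ, ∃ c, AffRel r l a g.1 c := by
      rintro ⟨g, hg⟩
      rw [hΓ] at hg
      show ∃ c, AffRel r l a g c
      induction hg using Subgroup.closure_induction with
      | mem x hx =>
        rcases hx with hx | ⟨v, rfl⟩
        · cases hx; exact ⟨_, AffRel.gamma r l a B hcol hrow hainv γ hγ⟩
        · exact ⟨_, AffRel.ofTrans r l a v⟩
      | one => exact ⟨_, AffRel.one⟩
      | mul x y _ _ hx hy =>
        obtain ⟨c, hc⟩ := hx (by rw [hΓ]; assumption)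
        obtain ⟨d, hd⟩ := hy (by rw [hΓ]; assumption)
        exact ⟨_, hc.mul hd⟩
      | inv x _ hx =>
        obtain ⟨c, hc⟩ := hx (by rw [hΓ]; assumption)
        exact ⟨_, hc.inv⟩
    choose c hc using hex
    let φ : ↥Γ →* Multiplicative (ZMod 2) :=
      { toFun := fun g => Multiplicative.ofAdd (c g)
        map_one' := by
          have : c 1 = 0 := (hc 1).uniq AffRel.one
          rw [this]; rfl
        map_mul' := fun g h => by
          have : c (g * h) = c g + c h := (hc (g * h)).uniq ((hc g).mul (hc h))
          rw [this]; rfl }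
    refine ⟨φ, ?_⟩
    show (fun s => c (gen s)) = t
    funext s
    refine (hc (gen s)).uniq ?_
    by_cases h : sec s = l
    · have hsl : t s = a l := by
        simp only [a, ← h, hs]
      simp only [gen, h, if_true, hsl]
      exact AffRel.gamma r l a B hcol hrow hainv γ hγ
    · have := AffRel.ofTrans r l a (Pi.single (sec s) 1)
      simp only [gen, h, if_false]
      have e : Function.update (Pi.single (sec s) (1:ℤ) : Fin n → ℤ) l
          (2 ^ r * (Pi.single (sec s) (1:ℤ) : Fin n → ℤ) l) = Pi.single (sec s) 1 := by
        have h0 : (Pi.single (sec s) (1:ℤ) : Fin n → ℤ) l = 0 := by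
          simp [Ne.symm h]
        rw [h0, mul_zero, ← h0, Function.update_eq_self]
      rw [e, modFun_single] at this
      simpa only [a, hs] using this

/-- mod 2 the matrix acts as one cycle -/
def OneCyc {ι : Type} [Fintype ι] (M : Matrix ι ι ℤ) : Prop :=
  ∀ a : ι → ZMod 2, a ᵥ* (M.map (Int.cast : ℤ → ZMod 2)) = a ↔ ∀ i j, a i = a j

theorem OneCyc.reindex {ι κ : Type} [Fintype ι] [Fintype κ] (e : ι ≃ κ) {M : Matrix ι ι ℤ}
    (h : OneCyc M) : OneCyc (Matrix.reindex e e M) := by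
  intro a
  have h1 := h (a ∘ e)
  have h2 : a ᵥ* ((Matrix.reindex e e M).map (Int.cast : ℤ → ZMod 2)) =
      ((a ∘ e) ᵥ* (M.map (Int.cast : ℤ → ZMod 2))) ∘ e.symm := by
    funext j
    simp only [vecMul, dotProduct, Function.comp]
    rw [← e.sum_comp]
    simp
  rw [h2]
  constructor
  · intro hh i j
    have : (a ∘ e) ᵥ* (M.map (Int.cast : ℤ → ZMod 2)) = a ∘ e := by
      conv_rhs => rw [← hh]
      funext i; simp
    simpa using h1.1 this (e.symm i) (e.symm j)
  · intro hh
    rw [h1.2 fun i j => hh _ _]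
    funext i; simp

theorem Jmat_oneCyc (r : ℕ) : OneCyc (Jmat r) := by
  induction r with
  | zero =>
    intro a
    refine ⟨fun _ i j => ?_, fun _ => ?_⟩
    · congr 1
      exact Subsingleton.elim (α := Fin 1) i j
    · funext i
      change Fin 1 → ZMod 2 at a
      change Fin 1 at i
      show ∑ j : Fin 1, a j * (((-1 : ℤ) : ZMod 2)) = a i
      rw [Fin.sum_univ_one, Subsingleton.elim i 0]
      generalize a 0 = x
      revert x; decide
  | succ r ih =>
    rw [Jmat]
    apply OneCyc.reindex
    intro a
    rw [fromBlocks_map, vecMul_fromBlocks]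
    have h0 : (0 : Matrix (Fin (2 ^ r)) (Fin (2 ^ r)) ℤ).map (Int.cast : ℤ → ZMod 2) = 0 := by
      ext; simp
    have h1 : (1 : Matrix (Fin (2 ^ r)) (Fin (2 ^ r)) ℤ).map (Int.cast : ℤ → ZMod 2) = 1 := by
      rw [Matrix.map_one] <;> simp
    rw [h0, h1]
    simp only [vecMul_zero, vecMul_one, zero_add, add_zero]
    have hi := ih (a ∘ Sum.inl)
    constructor
    · intro h
      have e1 : a ∘ Sum.inr = a ∘ Sum.inl := by
        funext i; exact congrFun h (Sum.inl i)
      have e2 : (a ∘ Sum.inl) ᵥ* ((Jmat r).map (Int.cast : ℤ → ZMod 2)) = a ∘ Sum.inr := by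
        funext i; exact congrFun h (Sum.inr i)
      have e3 := hi.1 (e2.trans e1)
      have e4 : ∀ i, a (Sum.inr i) = a (Sum.inl i) := fun i => congrFun e1 i
      rintro (i | i) (j | j)
      · exact e3 i j
      · rw [e4]; exact e3 i j
      · rw [e4]; exact e3 i j
      · rw [e4, e4]; exact e3 i j
    · intro h
      rw [hi.2 fun i j => h _ _]
      funext x
      rcases x with x | x
      · exact h _ _
      · exact h _ _

theorem Jmat_pow (r : ℕ) : Jmat r ^ (2 ^ r) = -1 := by
  induction r with
  | zero =>
    refine (pow_one (Jmat 0)).trans ?_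
    ext i j
    have : i = j := Subsingleton.elim (α := Fin 1) i j
    subst this
    simp [Jmat]
  | succ r ih =>
    have key : (fromBlocks 0 (Jmat r) 1 0 :
        Matrix (Fin (2 ^ r) ⊕ Fin (2 ^ r)) (Fin (2 ^ r) ⊕ Fin (2 ^ r)) ℤ) ^ (2 ^ (r + 1))
        = -1 := by
      rw [pow_succ' 2 r, pow_mul, pow_two, fromBlocks_multiply]
      simp only [zero_mul, mul_zero, mul_one, one_mul, zero_add, add_zero]
      rw [fromBlocks_diagonal_pow, ih, ← fromBlocks_one, fromBlocks_neg]
      simp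
    rw [Jmat, ← Matrix.coe_reindexAlgEquiv ℤ ℤ, ← map_pow, key, map_neg, map_one]

theorem Cmat_col (r : ℕ) (j : Fin (2 ^ r)) (h : j.val + 1 < 2 ^ r) :
    (Cmat r).col j = Pi.single ⟨j.val + 1, h⟩ 1 := by
  funext i
  simp only [col_apply, Cmat, of_apply, Pi.single_apply, Fin.ext_iff]
  have := j.2
  split_ifs <;> first | rfl | omega

theorem Cmat_col' (r : ℕ) (j : Fin (2 ^ r)) (h : ¬ j.val + 1 < 2 ^ r) :
    (Cmat r).col j = Pi.single ⟨0, Nat.two_pow_pos r⟩ (-1) := by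
  funext i
  simp only [col_apply, Cmat, of_apply, Pi.single_apply, Fin.ext_iff]
  have := j.2
  have := i.2
  split_ifs <;> first | rfl | omega

theorem cast_single {ι R : Type} [DecidableEq ι] [Ring R] (k : ι) (c : ℤ) :
    (fun i => ((Pi.single k c : ι → ℤ) i : R)) = Pi.single k (c : R) := by
  funext j
  by_cases h : j = k
  · subst h; simp
  · simp [h]

theorem Cmat_oneCyc (r : ℕ) : OneCyc (Cmat r) := by
  intro a
  have key : ∀ j, (a ᵥ* ((Cmat r).map (Int.cast : ℤ → ZMod 2))) j =
      if h : j.val + 1 < 2 ^ r then a ⟨j.val + 1, h⟩ else a ⟨0, Nat.two_pow_pos r⟩ := by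
    intro j
    have e : (a ᵥ* ((Cmat r).map (Int.cast : ℤ → ZMod 2))) j =
      a ⬝ᵥ (fun i => ((Cmat r).col j i : ZMod 2)) := rfl
    rw [e]
    split_ifs with h
    · rw [Cmat_col r j h, cast_single]; simp
    · rw [Cmat_col' r j h, cast_single]; simp
  constructor
  · intro h
    have h0 : ∀ m (hm : m < 2 ^ r), a ⟨m, hm⟩ = a ⟨0, Nat.two_pow_pos r⟩ := by
      intro m
      induction m with
      | zero => intro _; rfl
      | succ m ih =>
        intro hm
        have := key ⟨m, by omega⟩
        rw [h, dif_pos hm] at this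
        rw [← this]; exact ih _
    intro i j
    rw [show a i = _ from h0 i.1 i.2, show a j = _ from h0 j.1 j.2]
  · intro h
    funext j
    rw [key]
    split_ifs <;> exact h _ _

theorem Cmat_pow (r : ℕ) : Cmat r ^ (2 ^ r) = -1 := by
  have hp := Nat.two_pow_pos r
  have h0 : ∀ m (hm : m < 2 ^ r), (Cmat r ^ m) *ᵥ Pi.single ⟨0, hp⟩ 1 = Pi.single ⟨m, hm⟩ 1 := by
    intro m
    induction m with
    | zero => intro _; rw [pow_zero, one_mulVec]
    | succ m ih =>
      intro hm
      rw [pow_succ', ← mulVec_mulVec, ih (by omega), mulVec_single_one]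
      exact Cmat_col r ⟨m, by omega⟩ hm
  have h1 : (Cmat r ^ (2 ^ r)) *ᵥ Pi.single ⟨0, hp⟩ 1 = -Pi.single ⟨0, hp⟩ 1 := by
    obtain ⟨m, hm⟩ : ∃ m, 2 ^ r = m + 1 := ⟨2 ^ r - 1, by omega⟩
    have : Cmat r ^ (2 ^ r) = Cmat r * Cmat r ^ m := by rw [← pow_succ', ← hm]
    rw [this, ← mulVec_mulVec, h0 m (by omega), mulVec_single_one,
      Cmat_col' r ⟨m, by omega⟩ (by simp [hm]), Pi.single_neg]
  apply Matrix.ext_of_mulVec_single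
  intro i
  rw [← h0 i.1 i.2, mulVec_mulVec, ← pow_add, add_comm, pow_add, ← mulVec_mulVec, h1,
    mulVec_neg, neg_mulVec, one_mulVec]

theorem pow_two_pow_eq_one {ι : Type} [Fintype ι] [DecidableEq ι] {M : Matrix ι ι ℤ} {i r : ℕ}
    (h : M ^ (2 ^ i) = -1) (hi : i + 1 ≤ r) : M ^ (2 ^ r) = 1 := by
  obtain ⟨d, rfl⟩ := Nat.exists_eq_add_of_le hi
  rw [pow_add, pow_add, pow_mul, pow_mul, h]
  simp

theorem blockMat_pow (r : ℕ) (hr : 2 ≤ r) (k k' : ℕ → ℕ) (j₁ : ℕ) (x : BlockIx r k k' j₁) :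
    blockMat r k k' j₁ x ^ (2 ^ r) = 1 := by
  rcases x with ⟨i, _ | _⟩ | _ | _
  · exact pow_two_pow_eq_one (Cmat_pow (i.val + 2)) (by omega)
  · exact pow_two_pow_eq_one (Jmat_pow (i.val + 2)) (by omega)
  · exact pow_two_pow_eq_one (Jmat_pow 1) (by omega)
  · exact one_pow _

theorem blockMat_oneCyc (r : ℕ) (k k' : ℕ → ℕ) (j₁ : ℕ) (x : BlockIx r k k' j₁) :
    OneCyc (blockMat r k k' j₁ x) := by
  rcases x with ⟨i, _ | _⟩ | _ | _
  · exact Cmat_oneCyc (i.val + 2)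
  · exact Jmat_oneCyc (i.val + 2)
  · exact Jmat_oneCyc 1
  · intro a
    refine ⟨fun _ i j => ?_, fun _ => ?_⟩
    · congr 1
      exact Subsingleton.elim (α := Fin 1) i j
    · have : (blockMat r k k' j₁ (Sum.inr (Sum.inr ()))).map (Int.cast : ℤ → ZMod 2) = 1 := by
        rw [blockMat, Matrix.map_one] <;> simp
      exact (congrArg (a ᵥ* ·) this).trans (vecMul_one a)

theorem blockSize_pos (r : ℕ) (k k' : ℕ → ℕ) (j₁ : ℕ) (x : BlockIx r k k' j₁) :
    0 < blockSize r k k' j₁ x := by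
  rcases x with ⟨i, _ | _⟩ | _ | _ <;> exact Nat.two_pow_pos _

theorem card_blockIx (r : ℕ) (hr : 2 ≤ r) (k k' j : ℕ → ℕ)
    (hj : ∀ i, 2 ≤ i → i ≤ r - 1 → j i = k i + k' i) :
    Fintype.card (BlockIx r k k' (j 1)) = (∑ i ∈ Finset.Icc 1 (r - 1), j i) + 1 := by
  have h1 : ∑ i ∈ Finset.Icc 1 (r - 1), j i =
      j 1 + ∑ i ∈ Finset.range (r - 2), (k (i + 2) + k' (i + 2)) := by
    obtain ⟨m, rfl⟩ := Nat.exists_eq_add_of_le hr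
    have : Finset.Icc 1 (2 + m - 1) = Finset.Ico 1 (m + 2) := by
      ext x; simp; omega
    rw [this, Finset.sum_Ico_eq_sum_range, show m + 2 - 1 = m + 1 by omega,
      Finset.sum_range_succ', add_comm, show 2 + m - 2 = m by omega]
    congr 1
    refine Finset.sum_congr rfl fun i hi => ?_
    have := Finset.mem_range.1 hi
    rw [show 1 + (i + 1) = i + 2 by omega]
    exact hj _ (by omega) (by omega)
  rw [h1, Finset.sum_range]
  simp only [Fintype.card_sum, Fintype.card_sigma, Fintype.card_fin, Fintype.card_unit]
  omega

theorem blockDiag_inv {o : Type} [Fintype o] [DecidableEq o] (s : o → ℕ)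
    (M : ∀ x, Matrix (Fin (s x)) (Fin (s x)) ℤ) (hM : ∀ x, OneCyc (M x))
    (hs : ∀ x, 0 < s x) (a : (Σ x, Fin (s x)) → ZMod 2) :
    a ᵥ* ((blockDiagonal' M).map (Int.cast : ℤ → ZMod 2)) = a ↔
      ∀ y, a y = a ⟨y.1, ⟨0, hs y.1⟩⟩ := by
  have key : ∀ x i, (a ᵥ* ((blockDiagonal' M).map (Int.cast : ℤ → ZMod 2))) ⟨x, i⟩ =
      ((fun i => a ⟨x, i⟩) ᵥ* ((M x).map (Int.cast : ℤ → ZMod 2))) i := by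
    intro x i
    simp only [vecMul, dotProduct, Fintype.sum_sigma, map_apply]
    rw [Fintype.sum_eq_single x]
    · simp
    · intro y hy
      simp [blockDiagonal'_apply_ne M _ _ hy]
  constructor
  · rintro h ⟨x, i⟩
    refine (hM x (fun i => a ⟨x, i⟩)).1 ?_ i _
    funext i
    rw [← key, h]
  · intro h
    funext ⟨x, i⟩
    rw [key, (hM x (fun i => a ⟨x, i⟩)).2]
    intro i j
    show a _ = a _
    rw [h, h ⟨x, j⟩]

/-- **`H¹(M, ℤ₂)` (spin structures) of the `ℤ_{2^r}`-manifolds `M_{k(r)}` in the family `𝓕`.**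
With `B` the block-diagonal matrix above (of size `n = 2^{r−1} j_{r−1} + ⋯ + 4 j_2 + 2 j_1 + 1`,
the final `1 × 1` block sitting in the last coordinate), and `Γ` the Bieberbach group generated
by `γ : x ↦ Bx + (1/2^r) eₙ` and the translations by `ℤ^n`, the group of all group
homomorphisms `Γ → ℤ/2ℤ` is isomorphic to `(ℤ/2ℤ)^{j_{r−1} + ⋯ + j_2 + j_1 + 1}`;
in particular it has exactly `2^{j_{r−1} + ⋯ + j_1 + 1}` elements. -/
theorem homs_to_Z2_of_Z2r_manifold_group
    (r : ℕ) (hr : 2 ≤ r) (k k' j : ℕ → ℕ)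
    (hj : ∀ i, 2 ≤ i → i ≤ r - 1 → j i = k i + k' i)
    (hj1 : Odd (j 1)) (hj1pos : 1 ≤ j 1) (hjr : 1 ≤ j (r - 1))
    (n : ℕ) (hn : n = (∑ i ∈ Finset.Icc 1 (r - 1), 2 ^ i * j i) + 1)
    (B : GL (Fin n) ℤ)
    (e : (Σ x : BlockIx r k k' (j 1), Fin (blockSize r k k' (j 1) x)) ≃ Fin n)
    (he : e ⟨Sum.inr (Sum.inr ()), ⟨0, Nat.one_pos⟩⟩ = ⟨n - 1, by omega⟩)
    (hB : (B : Matrix (Fin n) (Fin n) ℤ) =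
      Matrix.reindex e e (Matrix.blockDiagonal' (blockMat r k k' (j 1)))) :
    let Bℝ : GL (Fin n) ℝ := Units.map (RingHom.mapMatrix (Int.castRingHom ℝ)).toMonoidHom B
    let γ : (Fin n → ℝ) ≃ᵃ[ℝ] (Fin n → ℝ) :=
      (LinearMap.GeneralLinearGroup.toLinearEquiv
        (Matrix.GeneralLinearGroup.toLin Bℝ)).toAffineEquiv.trans
        (AffineEquiv.constVAdd ℝ (Fin n → ℝ)
          (Pi.single (⟨n - 1, by omega⟩ : Fin n) (((2 : ℝ) ^ r)⁻¹)))
    let Γ : Subgroup ((Fin n → ℝ) ≃ᵃ[ℝ] (Fin n → ℝ)) :=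
      Subgroup.closure ({γ} ∪
        Set.range (fun v : Fin n → ℤ =>
          AffineEquiv.constVAdd ℝ (Fin n → ℝ) (fun i => (v i : ℝ))))
    Nonempty ((↥Γ →* Multiplicative (ZMod 2)) ≃*
      Multiplicative (Fin ((∑ i ∈ Finset.Icc 1 (r - 1), j i) + 1) → ZMod 2)) ∧
    Nat.card (↥Γ →* Multiplicative (ZMod 2)) =
      2 ^ ((∑ i ∈ Finset.Icc 1 (r - 1), j i) + 1) := by
  intro Bℝ γ Γ
  have hx0 : ∀ y : (Σ x : BlockIx r k k' (j 1), Fin (blockSize r k k' (j 1) x)),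
      y.1 = Sum.inr (Sum.inr ()) → y = ⟨Sum.inr (Sum.inr ()), ⟨0, Nat.one_pos⟩⟩ := by
    rintro ⟨x, i⟩ h
    change x = _ at h
    subst h
    congr 1
    exact Subsingleton.elim (α := Fin 1) _ _
  have hcolD : ∀ y, blockDiagonal' (blockMat r k k' (j 1)) y
      ⟨Sum.inr (Sum.inr ()), ⟨0, Nat.one_pos⟩⟩ =
      if y = ⟨Sum.inr (Sum.inr ()), ⟨0, Nat.one_pos⟩⟩ then 1 else 0 := by
    intro y
    split_ifs with h
    · subst h
      rw [blockDiagonal'_apply_eq]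
      rfl
    · exact blockDiagonal'_apply_ne _ _ _ (fun h' => h (hx0 y h'))
  have hrowD : ∀ y, blockDiagonal' (blockMat r k k' (j 1))
      ⟨Sum.inr (Sum.inr ()), ⟨0, Nat.one_pos⟩⟩ y =
      if y = ⟨Sum.inr (Sum.inr ()), ⟨0, Nat.one_pos⟩⟩ then 1 else 0 := by
    intro y
    split_ifs with h
    · subst h
      rw [blockDiagonal'_apply_eq]
      rfl
    · exact blockDiagonal'_apply_ne _ _ _ (fun h' => h (hx0 y h'.symm))
  have hpow : B.1 ^ (2 ^ r) = 1 := by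
    rw [hB, ← Matrix.coe_reindexAlgEquiv ℤ ℤ, ← map_pow, ← blockDiagonal'_pow]
    have : blockMat r k k' (j 1) ^ (2 ^ r) = 1 := by
      funext x
      exact blockMat_pow r hr k k' (j 1) x
    rw [this, blockDiagonal'_one, map_one]
  have hsec : ∀ y, e ⟨(e.symm (e y)).1, ⟨0, blockSize_pos r k k' (j 1) (e.symm (e y)).1⟩⟩ =
      e ⟨y.1, ⟨0, blockSize_pos r k k' (j 1) y.1⟩⟩ := by
    intro y
    rw [e.symm_apply_apply]
  have hmain : Nonempty ((↥Γ →* Multiplicative (ZMod 2)) ≃*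
      Multiplicative (BlockIx r k k' (j 1) → ZMod 2)) := by
    refine hom_equiv r (⟨n - 1, by omega⟩ : Fin n) B ?_ ?_ hpow
      (fun i => (e.symm i).1) (fun t => e ⟨t, ⟨0, blockSize_pos r k k' (j 1) t⟩⟩)
      (fun t => by simp) ?_ ?_ γ ?_ Γ rfl
    · rw [← he]
      funext i
      obtain ⟨y, rfl⟩ := e.surjective i
      rw [mulVec_single_one, col_apply, hB, reindex_apply, submatrix_apply, e.symm_apply_apply,
        e.symm_apply_apply, hcolD, Pi.single_apply]
      simp only [e.apply_eq_iff_eq]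
    · rw [← he]
      funext i
      obtain ⟨y, rfl⟩ := e.surjective i
      rw [single_one_vecMul, row_apply, hB, reindex_apply, submatrix_apply, e.symm_apply_apply,
        e.symm_apply_apply, hrowD, Pi.single_apply]
      simp only [e.apply_eq_iff_eq]
    · rw [← he]
      exact hsec _
    · intro a
      have h1 := blockDiag_inv (blockSize r k k' (j 1)) (blockMat r k k' (j 1))
        (blockMat_oneCyc r k k' (j 1)) (blockSize_pos r k k' (j 1)) (a ∘ e)
      have h2 : a ᵥ* (B.1.map (Int.cast : ℤ → ZMod 2)) =
          ((a ∘ e) ᵥ* ((blockDiagonal' (blockMat r k k' (j 1))).map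
            (Int.cast : ℤ → ZMod 2))) ∘ e.symm := by
        funext i
        simp only [vecMul, dotProduct, Function.comp]
        rw [← e.sum_comp, hB]
        simp
      rw [h2, Equiv.comp_symm_eq, h1]
      constructor
      · intro h i
        have := h (e.symm i)
        simpa using this
      · intro h y
        have := h (e y)
        rw [hsec] at this
        exact this
    · intro x
      rw [add_comm]
      rfl
  obtain ⟨f⟩ := hmain
  have hcard := card_blockIx r hr k k' j hj
  let g : (BlockIx r k k' (j 1) → ZMod 2) ≃+
      (Fin ((∑ i ∈ Finset.Icc 1 (r - 1), j i) + 1) → ZMod 2) :=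
    { (Fintype.equivFinOfCardEq hcard).arrowCongr (Equiv.refl (ZMod 2)) with
      map_add' := fun _ _ => rfl }
  have F := f.trans (AddEquiv.toMultiplicative g)
  refine ⟨⟨F⟩, ?_⟩
  rw [Nat.card_congr F.toEquiv, Nat.card_congr Multiplicative.toAdd, Nat.card_fun]
  simp
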